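/- arXiv:1206.2568 — 8 statements merged into one kernel-verified Lean document; each statement's English description precedes it below -/
import Mathlib

section
/- Let G = (L, R, E) be a (c, ε, δ)-expander Tanner graph on n left vertices, where ε > 2/3 and εc is an integer. Then for every set U ⊆ L with |U| ≤ ((3ε−2)/(2ε−1))·(⌊δn⌋ − 1), there exists a feasible edge-weight assignment with respect to U. (This is the combinatorial core of the paper's Main Theorem: via the implicit result of Feldman et al., it implies that LP decoding of the associated code corrects ((3ε−2)/(2ε−1))·(⌊δn⌋−1) errors.) -/
open Finset

/-- The set of right-neighbors of the left (variable) node `i` in the Tanner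
graph with edge set `E`. -/
def leftNbrs {n : ℕ} {R : Type*} [Fintype R] [DecidableEq R]
    (E : Finset (Fin n × R)) (i : Fin n) : Finset R :=
  Finset.univ.filter fun j => (i, j) ∈ E

/-- The set of left-neighbors of the right (check) node `j`. -/
def rightNbrs {n : ℕ} {R : Type*} [Fintype R] [DecidableEq R]
    (E : Finset (Fin n × R)) (j : R) : Finset (Fin n) :=
  Finset.univ.filter fun i => (i, j) ∈ E

/-- `N(S)`: the set of (right) neighbors of a set `S` of left vertices. -/
def nbrSet {n : ℕ} {R : Type*} [Fintype R] [DecidableEq R]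
    (E : Finset (Fin n × R)) (S : Finset (Fin n)) : Finset R :=
  S.biUnion (leftNbrs E)

/-- `G = ([n], R, E)` is a `(c, ε, δ)`-expander: every left vertex has degree
exactly `c`, and every `S ⊆ L` with `|S| ≤ δn` satisfies `|N(S)| ≥ εc|S|`. -/
def IsExpander {R : Type*} [Fintype R] [DecidableEq R] (n c : ℕ) (ε δ : ℝ)
    (E : Finset (Fin n × R)) : Prop :=
  (∀ i : Fin n, (leftNbrs E i).card = c) ∧
  ∀ S : Finset (Fin n), (S.card : ℝ) ≤ δ * n →
    ε * c * S.card ≤ ((nbrSet E S).card : ℝ)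

/-- A weight assignment `τ` on edges is feasible w.r.t. the error set `U`:
(1) for every check node `j` and distinct neighbors `i, i'` of `j`,
`τ_{i,j} + τ_{i',j} ≥ 0`; (2) for every variable node `i`,
`Σ_{j ∈ N(i)} τ_{i,j} < γ_i`, where `γ_i = -1` if `i ∈ U` and `γ_i = 1`
otherwise. -/
def FeasibleWeights {n : ℕ} {R : Type*} [Fintype R] [DecidableEq R]
    (E : Finset (Fin n × R)) (U : Finset (Fin n)) (τ : Fin n × R → ℝ) : Prop :=
  (∀ j : R, ∀ i ∈ rightNbrs E j, ∀ i' ∈ rightNbrs E j, i ≠ i' →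
      0 ≤ τ (i, j) + τ (i', j)) ∧
  ∀ i : Fin n, (∑ j ∈ leftNbrs E i, τ (i, j)) < (if i ∈ U then (-1 : ℝ) else 1)


lemma aux_hall {n : ℕ} {R : Type*} [Fintype R] [DecidableEq R]
    (E : Finset (Fin n × R)) (k : ℕ) (V : Finset (Fin n))
    (h : ∀ S ⊆ V, k * S.card ≤ (nbrSet E S).card) :
    ∃ A : Fin n → Finset R, (∀ i ∈ V, A i ⊆ leftNbrs E i) ∧ (∀ i ∈ V, (A i).card = k) ∧
      ∀ i ∈ V, ∀ i' ∈ V, i ≠ i' → Disjoint (A i) (A i') := by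
  classical
  obtain ⟨f, hf, hft⟩ := (Finset.all_card_le_biUnion_card_iff_exists_injective
    (fun p : V × Fin k => leftNbrs E p.1.1)).1 (by
      intro s
      have h1 := h ((s.image Prod.fst).image Subtype.val) (by
        intro x hx
        simp only [mem_image] at hx
        obtain ⟨a, _, rfl⟩ := hx
        exact a.2)
      rw [card_image_of_injective _ Subtype.val_injective] at h1
      have h2 : s.card ≤ k * (s.image Prod.fst).card := by
        have : s ⊆ (s.image Prod.fst) ×ˢ (univ : Finset (Fin k)) := by
          intro p hp
          simp only [mem_product, mem_univ, and_true]
          exact mem_image_of_mem _ hp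
        have := card_le_card this
        rw [card_product, card_univ, Fintype.card_fin] at this
        linarith [mul_comm k (s.image Prod.fst).card]
      have h3 : nbrSet E ((s.image Prod.fst).image Subtype.val)
          = s.biUnion (fun p : V × Fin k => leftNbrs E p.1.1) := by
        ext j
        simp only [nbrSet, mem_biUnion, mem_image]
        constructor
        · rintro ⟨a, ⟨b, ⟨p, hp, rfl⟩, rfl⟩, hj⟩
          exact ⟨p, hp, hj⟩
        · rintro ⟨p, hp, hj⟩
          exact ⟨_, ⟨_, ⟨p, hp, rfl⟩, rfl⟩, hj⟩
      rw [← h3]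
      exact h2.trans h1)
  refine ⟨fun i => if hi : i ∈ V then univ.image (fun a : Fin k => f (⟨i, hi⟩, a)) else ∅,
    ?_, ?_, ?_⟩
  · intro i hi j hj
    simp only [hi, dite_true, mem_image, mem_univ, true_and] at hj
    obtain ⟨a, rfl⟩ := hj
    exact hft (⟨i, hi⟩, a)
  · intro i hi
    simp only [hi, dite_true]
    rw [card_image_of_injective]
    · simp
    · intro a b hab
      simpa using hf hab
  · intro i hi i' hi' hne
    simp only [hi, hi', dite_true]
    rw [Finset.disjoint_left]
    intro j hj hj'
    simp only [mem_image, mem_univ, true_and] at hj hj'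
    obtain ⟨a, rfl⟩ := hj
    obtain ⟨b, hb⟩ := hj'
    have := hf hb
    simp only [Prod.mk.injEq, Subtype.mk.injEq] at this
    exact hne this.1.symm

lemma aux_count {n : ℕ} {R : Type*} [Fintype R] [DecidableEq R]
    (E : Finset (Fin n × R)) (c d : ℕ) (U W : Finset (Fin n))
    (hdeg : ∀ i : Fin n, (leftNbrs E i).card = c)
    (hW : ∀ i ∈ W, (leftNbrs E i \ nbrSet E U).card ≤ d) :
    (nbrSet E (U ∪ W)).card ≤ c * U.card + d * W.card := by
  classical
  have h1 : nbrSet E (U ∪ W) ⊆ nbrSet E U ∪ W.biUnion (fun i => leftNbrs E i \ nbrSet E U) := by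
    intro j hj
    by_cases hjU : j ∈ nbrSet E U
    · exact mem_union_left _ hjU
    · apply mem_union_right
      simp only [nbrSet, mem_biUnion, mem_union] at hj
      obtain ⟨i, hi | hi, hij⟩ := hj
      · exact absurd (mem_biUnion.2 ⟨i, hi, hij⟩) hjU
      · exact mem_biUnion.2 ⟨i, hi, mem_sdiff.2 ⟨hij, hjU⟩⟩
  have h2 : (nbrSet E U).card ≤ U.card * c := card_biUnion_le_card_mul _ _ _ fun i _ => (hdeg i).le
  have h3 := card_biUnion_le_card_mul W (fun i => leftNbrs E i \ nbrSet E U) d hW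
  have h4 := card_le_card h1
  have h5 := card_union_le (nbrSet E U) (W.biUnion (fun i => leftNbrs E i \ nbrSet E U))
  linarith [mul_comm U.card c, mul_comm W.card d]

/-- Main Theorem (combinatorial core): if `G` is a `(c, ε, δ)`-expander with
`ε > 2/3` and `εc ∈ ℤ`, then for every `U ⊆ L` with
`|U| ≤ ((3ε−2)/(2ε−1))·(⌊δn⌋ − 1)` there is a feasible edge-weight assignment
with respect to `U`. -/
theorem main_theorem_feasible_weights {R : Type*} [Fintype R] [DecidableEq R]
    (n c : ℕ) (ε δ : ℝ) (E : Finset (Fin n × R))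
    (hc : 0 < c) (hε : 2 / 3 < ε) (hδ : 0 < δ)
    (k : ℕ) (hk : (k : ℝ) = ε * c)
    (hexp : IsExpander n c ε δ E) (U : Finset (Fin n))
    (hU : (U.card : ℝ) ≤ (3 * ε - 2) / (2 * ε - 1) * ((⌊δ * n⌋₊ : ℝ) - 1)) :
    ∃ τ : Fin n × R → ℝ, FeasibleWeights E U τ := by
  classical
  obtain ⟨hdeg, hex⟩ := hexp
  set m := ⌊δ * n⌋₊ with hm
  have hcR : (0 : ℝ) < c := by exact_mod_cast hc
  have h0 : (0 : ℝ) ≤ δ * n := by positivity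
  have hex' : ∀ S : Finset (Fin n), S.card ≤ m → k * S.card ≤ (nbrSet E S).card := by
    intro S hS
    have h1 : (S.card : ℝ) ≤ δ * n := (Nat.le_floor_iff h0).1 hS
    have := hex S h1
    rw [← hk] at this
    exact_mod_cast this
  have h3k : 2 * c < 3 * k := by
    have : (2 * c : ℝ) < 3 * k := by rw [hk]; nlinarith
    exact_mod_cast this
  have hUk : (U.card : ℤ) * (2 * k - c) ≤ (3 * k - 2 * c) * (m - 1) := by
    have h1 : (0 : ℝ) < 2 * ε - 1 := by linarith
    rw [div_mul_eq_mul_div, le_div_iff₀ h1] at hU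
    have h2 := mul_le_mul_of_nonneg_right hU hcR.le
    have : (U.card : ℝ) * (2 * k - c) ≤ (3 * k - 2 * c) * (m - 1) := by
      rw [hk]; linarith
    exact_mod_cast this
  have hm1 : 1 ≤ m := by
    by_contra hcon
    have hm0 : m = 0 := by omega
    rw [hm0] at hUk
    have : (0 : ℤ) ≤ (U.card : ℤ) * (2 * k - c) := mul_nonneg (by positivity) (by omega)
    push_cast at hUk
    omega
  have hn : 0 < n := by
    rcases Nat.eq_zero_or_pos n with h | h
    · subst h
      simp at hm
      omega
    · exact h
  have hkc : k ≤ c := by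
    have := hex' {⟨0, hn⟩} (by simpa using hm1)
    simpa [nbrSet, hdeg] using this
  have hUm : U.card ≤ m := by
    by_contra hcon
    have h1 : (m : ℤ) < U.card := by exact_mod_cast (not_le.1 hcon)
    have h2 : (0 : ℤ) < 3 * k - 2 * c := by omega
    have h3 : (k : ℤ) ≤ c := by exact_mod_cast hkc
    nlinarith
  set W : Finset (Fin n) :=
    univ.filter (fun i => i ∉ U ∧ (leftNbrs E i \ nbrSet E U).card ≤ 2 * c - 2 * k) with hWdef
  have hWU : ∀ i ∈ W, i ∉ U := fun i hi => (mem_filter.1 hi).2.1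
  have hWd : ∀ i ∈ W, (leftNbrs E i \ nbrSet E U).card ≤ 2 * c - 2 * k :=
    fun i hi => (mem_filter.1 hi).2.2
  have hUW : U.card + W.card ≤ m := by
    by_contra hcon
    obtain ⟨W', hW', hcard⟩ := exists_subset_card_eq (s := W) (n := m - U.card) (by omega)
    have hdis : Disjoint U W' := by
      rw [Finset.disjoint_left]
      intro i hi hi'
      exact hWU i (hW' hi') hi
    have h1 := aux_count E c (2 * c - 2 * k) U W' hdeg (fun i hi => hWd i (hW' hi))
    have h2 := hex' (U ∪ W') (by rw [card_union_of_disjoint hdis]; omega)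
    rw [card_union_of_disjoint hdis] at h2
    have h3 := h2.trans h1
    have hsum : U.card + W'.card = m := by omega
    have hsumZ : (W'.card : ℤ) = m - U.card := by omega
    zify [show 2 * k ≤ 2 * c by omega] at h3
    rw [hsumZ] at h3
    have h2 : (0 : ℤ) < 3 * k - 2 * c := by omega
    nlinarith
  obtain ⟨A, hAsub, hAcard, hAdis⟩ := aux_hall E k (U ∪ W) (by
    intro S hS
    apply hex'
    exact (card_le_card hS).trans ((card_union_le _ _).trans hUW))
  set M : Finset R := U.biUnion A with hM
  have hMN : M ⊆ nbrSet E U := by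
    intro j hj
    obtain ⟨i, hi, hij⟩ := mem_biUnion.1 hj
    exact mem_biUnion.2 ⟨i, hi, hAsub i (mem_union_left _ hi) hij⟩
  have hden : (1 : ℝ) ≤ 4 * k - 2 * c - 1 := by
    have : (2 * c : ℝ) + 2 ≤ 4 * k := by
      have : 2 * c + 2 ≤ 4 * k := by omega
      exact_mod_cast this
    linarith
  obtain ⟨x, hx0, hx⟩ : ∃ x : ℝ, 0 < x ∧ x * (4 * k - 2 * c - 1) = 2 :=
    ⟨2 / (4 * k - 2 * c - 1), by positivity, by field_simp⟩
  refine ⟨fun p => if p.2 ∈ M then (if p.1 ∈ U ∧ p.2 ∈ A p.1 then -x else x) else 0, ?_, ?_⟩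
  · intro j i _ i' _ hne
    dsimp only
    by_cases hj : j ∈ M
    · simp only [hj, if_true]
      by_cases h1 : i ∈ U ∧ j ∈ A i
      · by_cases h2 : i' ∈ U ∧ j ∈ A i'
        · exact absurd h2.2 (Finset.disjoint_left.1 (hAdis i (mem_union_left _ h1.1) i'
            (mem_union_left _ h2.1) hne) h1.2)
        · simp [h1, h2]
      · by_cases h2 : i' ∈ U ∧ j ∈ A i'
        · simp [h1, h2]
        · simp only [h1, h2, if_false]; linarith
    · simp [hj]
  · intro i
    dsimp only
    by_cases hi : i ∈ U
    · have hiV : i ∈ U ∪ W := mem_union_left _ hi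
      simp only [hi, if_true, true_and]
      rw [← sum_sdiff (hAsub i hiV)]
      have e1 : (∑ j ∈ A i, if j ∈ M then (if j ∈ A i then -x else x) else 0) = k * (-x) := by
        rw [← hAcard i hiV, ← nsmul_eq_mul]
        apply sum_eq_card_nsmul
        intro j hj
        have : j ∈ M := mem_biUnion.2 ⟨i, hi, hj⟩
        simp [this, hj]
      have e2 : (∑ j ∈ leftNbrs E i \ A i, if j ∈ M then (if j ∈ A i then -x else x) else 0)
          ≤ (c - k : ℝ) * x := by
        have h1 : (leftNbrs E i \ A i).card = c - k := by
          rw [card_sdiff_of_subset (hAsub i hiV), hdeg, hAcard i hiV]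
        have h2 : ((c - k : ℕ) : ℝ) = (c - k : ℝ) := by push_cast [hkc]; ring
        rw [← h2, ← h1, ← nsmul_eq_mul]
        apply sum_le_card_nsmul
        intro j _
        split_ifs <;> linarith
      rw [e1]
      nlinarith
    · simp only [hi, if_false, false_and]
      rw [← sum_filter, sum_const, nsmul_eq_mul]
      have hb : ((leftNbrs E i).filter (· ∈ M)).card + c + 1 ≤ 2 * k := by
        by_cases hiW : i ∈ W
        · have hiV : i ∈ U ∪ W := mem_union_right _ hiW
          have h1 : (leftNbrs E i).filter (· ∈ M) ⊆ leftNbrs E i \ A i := by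
            intro j hj
            obtain ⟨hj1, hj2⟩ := mem_filter.1 hj
            refine mem_sdiff.2 ⟨hj1, fun hj3 => ?_⟩
            obtain ⟨i', hi', hj4⟩ := mem_biUnion.1 hj2
            exact Finset.disjoint_left.1 (hAdis i' (mem_union_left _ hi') i hiV
              (fun h => hi (h ▸ hi'))) hj4 hj3
          have h2 := card_le_card h1
          rw [card_sdiff_of_subset (hAsub i hiV), hdeg, hAcard i hiV] at h2
          omega
        · have h1 : ¬ (leftNbrs E i \ nbrSet E U).card ≤ 2 * c - 2 * k := by
            intro h
            exact hiW (mem_filter.2 ⟨mem_univ _, hi, h⟩)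
          have h2 : (leftNbrs E i).filter (· ∈ M) ⊆ leftNbrs E i ∩ nbrSet E U := by
            intro j hj
            obtain ⟨hj1, hj2⟩ := mem_filter.1 hj
            exact mem_inter.2 ⟨hj1, hMN hj2⟩
          have h3 := card_le_card h2
          have h4 := card_sdiff_add_card_inter (leftNbrs E i) (nbrSet E U)
          rw [hdeg] at h4
          omega
      have hb' : (((leftNbrs E i).filter (· ∈ M)).card : ℝ) + c + 1 ≤ 2 * k := by
        exact_mod_cast hb
      nlinarith
end

section
/- Let G = (L, R, E) be a Tanner graph on n left vertices in which every left vertex has degree exactly c, let ε > 2/3 be such that εc is an integer, and let U ⊆ L. Define Û = { i ∈ L \ U : |N(i) ∩ N(U)| ≥ (2ε−1)c } and U' = U ∪ Û. If there exists an (εc)-matching M with respect to U', then there exists a feasible edge-weight assignment with respect to U. -/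
open Finset

/-- `M` is a matching: every right vertex is incident to at most one edge. -/
def IsMatching {n : ℕ} {R : Type*} (M : Finset (Fin n × R)) : Prop :=
  ∀ j : R, ∀ i i' : Fin n, (i, j) ∈ M → (i', j) ∈ M → i = i'

/-- `M` is a `q`-matching with respect to `U`: `M` is a matching and every
`u ∈ U` is incident to at least `q` edges of `M`. -/
def IsQMatching {n : ℕ} {R : Type*} [Fintype R] [DecidableEq R]
    (M : Finset (Fin n × R)) (U : Finset (Fin n)) (q : ℕ) : Prop :=
  IsMatching M ∧ ∀ u ∈ U, q ≤ (Finset.univ.filter fun j : R => (u, j) ∈ M).card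

/-- Proposition: if every left vertex has degree `c`, `ε > 2/3`, `εc ∈ ℤ`,
`Û = { i ∉ U : |N(i) ∩ N(U)| ≥ (2ε−1)c }`, `U' = U ∪ Û`, and there exists an
`(εc)`-matching with respect to `U'`, then there is a feasible edge-weight
assignment with respect to `U`. -/
theorem matching_gives_feasible_weights {R : Type*} [Fintype R] [DecidableEq R]
    (n c : ℕ) (ε : ℝ) (E : Finset (Fin n × R))
    (hreg : ∀ i : Fin n, (leftNbrs E i).card = c)
    (hc : 0 < c) (hε : 2 / 3 < ε) (k : ℕ) (hk : (k : ℝ) = ε * c)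
    (U Uhat : Finset (Fin n))
    (hUhat : ∀ i : Fin n, i ∈ Uhat ↔
      i ∉ U ∧ (2 * ε - 1) * c ≤ ((leftNbrs E i ∩ nbrSet E U).card : ℝ))
    (M : Finset (Fin n × R)) (hME : M ⊆ E)
    (hM : IsQMatching M (U ∪ Uhat) k) :
    ∃ τ : Fin n × R → ℝ, FeasibleWeights E U τ := by
  classical
  obtain ⟨hmat, hq⟩ := hM
  have h32 : 2 * c < 3 * k := by
    have hc' : (0 : ℝ) < c := by exact_mod_cast hc
    have : (2 * c : ℝ) < 3 * k := by rw [hk]; nlinarith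
    exact_mod_cast this
  set x : ℝ := 1 / (2 * k - c - 1 / 2) with hx
  have hD : (0 : ℝ) < 2 * k - c - 1 / 2 := by
    have : (c : ℝ) + 1 ≤ 2 * k := by
      have : c + 1 ≤ 2 * k := by omega
      exact_mod_cast this
    linarith
  have hx0 : 0 < x := by positivity
  have hxD : x * (2 * k - c - 1 / 2) = 1 := by
    rw [hx]; exact one_div_mul_cancel hD.ne'
  have hfilt : ∀ i : Fin n, (leftNbrs E i).filter (fun j => (i, j) ∈ M)
      = Finset.univ.filter fun j : R => (i, j) ∈ M := by
    intro i
    ext j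
    simp only [leftNbrs, Finset.mem_filter, Finset.mem_univ, true_and]
    exact ⟨fun h => h.2, fun h => ⟨hME h, h⟩⟩
  have hcount : ∀ i : Fin n, i ∈ U ∪ Uhat → ∃ m p : ℕ, k ≤ m ∧ m + p = c ∧
      ((leftNbrs E i).filter (fun j => (i, j) ∈ M)).card = m ∧
      ((leftNbrs E i).filter (fun j => ¬ (i, j) ∈ M)).card = p := by
    intro i hi
    refine ⟨_, _, ?_, ?_, rfl, rfl⟩
    · rw [hfilt]; exact hq i hi
    · rw [Finset.card_filter_add_card_filter_not, hreg]
  refine ⟨fun e => if ∃ u ∈ U, (u, e.2) ∈ M then (if e ∈ M then -x else x) else 0, ?_, ?_⟩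
  · intro j i _ i' _ hne
    dsimp only
    by_cases hj : ∃ u ∈ U, (u, j) ∈ M
    · simp only [if_pos hj]
      by_cases h1 : (i, j) ∈ M
      · have h2 : (i', j) ∉ M := fun h2 => hne (hmat j i i' h1 h2)
        simp [h1, h2]
      · rw [if_neg h1]
        split_ifs <;> linarith
    · simp only [if_neg hj]; simp
  · intro i
    dsimp only
    by_cases hU : i ∈ U
    · rw [if_pos hU]
      obtain ⟨m, p, hm, hmp, h1, h2⟩ := hcount i (Finset.mem_union_left _ hU)
      have hle : (∑ j ∈ leftNbrs E i,
          (if ∃ u ∈ U, (u, j) ∈ M then (if (i, j) ∈ M then -x else x) else 0))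
          ≤ ∑ j ∈ leftNbrs E i, (if (i, j) ∈ M then -x else x) := by
        apply Finset.sum_le_sum
        intro j _
        by_cases h : (i, j) ∈ M
        · rw [if_pos ⟨i, hU, h⟩]
        · simp only [if_neg h]; split_ifs <;> linarith
      refine lt_of_le_of_lt hle ?_
      rw [Finset.sum_ite, Finset.sum_const, Finset.sum_const, h1, h2]
      simp only [nsmul_eq_mul]
      have hm' : (k : ℝ) ≤ m := by exact_mod_cast hm
      have hmp' : (m : ℝ) + p = c := by exact_mod_cast hmp
      nlinarith
    · rw [if_neg hU]
      by_cases hH : i ∈ Uhat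
      · obtain ⟨m, p, hm, hmp, h1, h2⟩ := hcount i (Finset.mem_union_right _ hH)
        have hle : (∑ j ∈ leftNbrs E i,
            (if ∃ u ∈ U, (u, j) ∈ M then (if (i, j) ∈ M then -x else x) else 0))
            ≤ ∑ j ∈ leftNbrs E i, (if (i, j) ∈ M then 0 else x) := by
          apply Finset.sum_le_sum
          intro j _
          split_ifs <;> linarith
        refine lt_of_le_of_lt hle ?_
        rw [Finset.sum_ite, Finset.sum_const, Finset.sum_const, h1, h2]
        simp only [nsmul_eq_mul, mul_zero, zero_add]
        have hp : (p : ℝ) + c + 1 ≤ 2 * k := by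
          have : p + c + 1 ≤ 2 * k := by omega
          exact_mod_cast this
        nlinarith
      · have hlt : ((leftNbrs E i ∩ nbrSet E U).card : ℝ) < (2 * ε - 1) * c := by
          by_contra hcon
          exact hH ((hUhat i).2 ⟨hU, not_lt.1 hcon⟩)
        have hp : ((leftNbrs E i ∩ nbrSet E U).card : ℝ) + c + 1 ≤ 2 * k := by
          have h : ((leftNbrs E i ∩ nbrSet E U).card : ℝ) + c < 2 * k := by
            rw [hk]; linarith
          have h' : (leftNbrs E i ∩ nbrSet E U).card + c < 2 * k := by exact_mod_cast h
          exact_mod_cast h'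
        have hle : (∑ j ∈ leftNbrs E i,
            (if ∃ u ∈ U, (u, j) ∈ M then (if (i, j) ∈ M then -x else x) else 0))
            ≤ ∑ j ∈ leftNbrs E i, (if j ∈ nbrSet E U then x else 0) := by
          apply Finset.sum_le_sum
          intro j _
          by_cases hj : ∃ u ∈ U, (u, j) ∈ M
          · have hN : j ∈ nbrSet E U := by
              obtain ⟨u, hu, hum⟩ := hj
              simp only [nbrSet, leftNbrs, Finset.mem_biUnion, Finset.mem_filter,
                Finset.mem_univ, true_and]
              exact ⟨u, hu, hME hum⟩
            rw [if_pos hj, if_pos hN]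
            split_ifs <;> linarith
          · rw [if_neg hj]
            split_ifs <;> linarith
        refine lt_of_le_of_lt hle ?_
        rw [Finset.sum_ite, Finset.sum_const, Finset.sum_const, Finset.filter_mem_eq_inter]
        simp only [nsmul_eq_mul, mul_zero, add_zero]
        nlinarith
end

section
/- Let G = (L, R, E) be a (c, ε, δ)-expander Tanner graph on n left vertices with ε > 2/3, and let U ⊆ L satisfy |U| < ((3ε−2)/(2ε−1))·⌊δn⌋. Define Û = { i ∈ L \ U : |N(i) ∩ N(U)| ≥ (2ε−1)c }. Then |U ∪ Û| = |U| + |Û| ≤ δn (indeed |U ∪ Û| < ⌊δn⌋). -/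
open Finset

/-- Proposition (bound on `U ∪ Û`): if `G` is a `(c, ε, δ)`-expander with
`ε > 2/3`, `|U| < ((3ε−2)/(2ε−1))·⌊δn⌋`, and
`Û = { i ∉ U : |N(i) ∩ N(U)| ≥ (2ε−1)c }`, then
`|U ∪ Û| = |U| + |Û| ≤ δn` (indeed `|U ∪ Û| < ⌊δn⌋`). -/
theorem bound_on_U_union_Uhat {R : Type*} [Fintype R] [DecidableEq R]
    (n c : ℕ) (ε δ : ℝ) (E : Finset (Fin n × R))
    (hc : 0 < c) (hε : 2 / 3 < ε) (hδ : 0 < δ)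
    (hexp : IsExpander n c ε δ E)
    (U Uhat : Finset (Fin n))
    (hUhat : ∀ i : Fin n, i ∈ Uhat ↔
      i ∉ U ∧ (2 * ε - 1) * c ≤ ((leftNbrs E i ∩ nbrSet E U).card : ℝ))
    (hU : (U.card : ℝ) < (3 * ε - 2) / (2 * ε - 1) * (⌊δ * n⌋₊ : ℝ)) :
    (U ∪ Uhat).card = U.card + Uhat.card ∧
      ((U ∪ Uhat).card : ℝ) ≤ δ * n ∧ (U ∪ Uhat).card < ⌊δ * n⌋₊ := by
  obtain ⟨hdeg, hex⟩ := hexp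
  have hdisj : Disjoint U Uhat := by
    rw [Finset.disjoint_left]
    intro i hi hi'
    exact ((hUhat i).1 hi').1 hi
  have hcard : (U ∪ Uhat).card = U.card + Uhat.card := Finset.card_union_of_disjoint hdisj
  have h21 : 0 < 2 * ε - 1 := by linarith
  have hc' : (0 : ℝ) < c := by exact_mod_cast hc
  have hδn : 0 ≤ δ * n := by positivity
  have hmle : ((⌊δ * n⌋₊ : ℕ) : ℝ) ≤ δ * n := Nat.floor_le hδn
  generalize ⌊δ * (n : ℝ)⌋₊ = m at *
  have hU2 : (2 * ε - 1) * (U.card : ℝ) < (3 * ε - 2) * m := by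
    rw [div_mul_eq_mul_div, lt_div_iff₀ h21] at hU
    linarith
  have hm0 : 0 < m := by
    rcases Nat.eq_zero_or_pos m with h | h
    · subst h
      have : 0 ≤ (2 * ε - 1) * (U.card : ℝ) := by positivity
      simp at hU2
      linarith
    · exact h
  have hm1 : (1 : ℝ) ≤ m := by exact_mod_cast hm0
  have hn : 0 < n := by
    rcases Nat.eq_zero_or_pos n with h | h
    · subst h
      simp at hmle
      omega
    · exact h
  have hε1 : ε ≤ 1 := by
    have h := hex {⟨0, hn⟩} (by simp; linarith)
    simp only [nbrSet, Finset.singleton_biUnion, hdeg, Finset.card_singleton] at h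
    push_cast at h
    nlinarith
  have hUm : U.card < m := by
    by_contra hcon
    have h1 : (m : ℝ) ≤ U.card := by exact_mod_cast not_lt.1 hcon
    nlinarith
  have key : (U ∪ Uhat).card < m := by
    by_contra hcon
    obtain ⟨T, hT, hTc⟩ := Finset.exists_subset_card_eq (s := Uhat) (n := m - U.card) (by omega)
    have hTU : U.card + T.card = m := by omega
    have hTU' : (U.card : ℝ) + T.card = m := by exact_mod_cast hTU
    have hd : Disjoint U T := Finset.disjoint_of_subset_right hT hdisj
    have hx := hex (U ∪ T) (by
      rw [Finset.card_union_of_disjoint hd, hTU]; exact hmle)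
    rw [Finset.card_union_of_disjoint hd, hTU] at hx
    have hsub : nbrSet E (U ∪ T) ⊆
        nbrSet E U ∪ T.biUnion (fun i => leftNbrs E i \ nbrSet E U) := by
      intro j hj
      by_cases h : j ∈ nbrSet E U
      · exact Finset.mem_union_left _ h
      · obtain ⟨i, hi, hji⟩ := Finset.mem_biUnion.1 hj
        rcases Finset.mem_union.1 hi with hi | hi
        · exact absurd (Finset.mem_biUnion.2 ⟨i, hi, hji⟩) h
        · exact Finset.mem_union_right _
            (Finset.mem_biUnion.2 ⟨i, hi, Finset.mem_sdiff.2 ⟨hji, h⟩⟩)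
    have h1 : (nbrSet E (U ∪ T)).card ≤ (nbrSet E U).card +
        ∑ i ∈ T, (leftNbrs E i \ nbrSet E U).card :=
      (Finset.card_le_card hsub).trans ((Finset.card_union_le _ _).trans
        (Nat.add_le_add_left Finset.card_biUnion_le _))
    have h2 : (nbrSet E U).card ≤ U.card * c :=
      Finset.card_biUnion_le_card_mul _ _ _ (fun i _ => (hdeg i).le)
    have h3 : ∑ i ∈ T, ((leftNbrs E i \ nbrSet E U).card : ℝ) ≤
        T.card * (2 * (1 - ε) * c) := by
      rw [← nsmul_eq_mul]
      apply Finset.sum_le_card_nsmul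
      intro i hi
      have ha := ((hUhat i).1 (hT hi)).2
      have hb := Finset.card_sdiff_add_card_inter (leftNbrs E i) (nbrSet E U)
      rw [hdeg] at hb
      have hb' : ((leftNbrs E i \ nbrSet E U).card : ℝ)
        + ((leftNbrs E i ∩ nbrSet E U).card : ℝ) = c := by exact_mod_cast hb
      linarith
    have h1' : ((nbrSet E (U ∪ T)).card : ℝ) ≤ (nbrSet E U).card +
        ∑ i ∈ T, ((leftNbrs E i \ nbrSet E U).card : ℝ) := by exact_mod_cast h1
    have h2' : ((nbrSet E U).card : ℝ) ≤ U.card * c := by exact_mod_cast h2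
    have hT' : (T.card : ℝ) = m - U.card := by linarith
    rw [hT'] at h3
    have h4 : c * (ε * m) ≤ c * (U.card + (m - U.card) * (2 * (1 - ε)) : ℝ) := by linarith
    have h5 := le_of_mul_le_mul_left h4 hc'
    linarith
  refine ⟨hcard, ?_, key⟩
  have : ((U ∪ Uhat).card : ℝ) < m := by exact_mod_cast key
  linarith
end

section
/- Let G = (L, R, E) be a (c, ε, δ)-expander Tanner graph on n left vertices with ε > 2/3, let U ⊆ L, and let U'' ⊆ { i ∈ L \ U : |N(i) ∩ N(U)| ≥ (2ε−1)c } be such that |U ∪ U''| ≤ δn. Then (3ε−2)·|U''| ≤ (1−ε)·|U|, i.e., |U''| ≤ ((1−ε)/(3ε−2))·|U|. -/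
open Finset

/-- If `G` is a `(c, ε, δ)`-expander with `ε > 2/3`, `U ⊆ L`, and
`U'' ⊆ { i ∉ U : |N(i) ∩ N(U)| ≥ (2ε−1)c }` satisfies `|U ∪ U''| ≤ δn`,
then `(3ε−2)·|U''| ≤ (1−ε)·|U|`. -/
theorem bound_on_Upp {R : Type*} [Fintype R] [DecidableEq R]
    (n c : ℕ) (ε δ : ℝ) (E : Finset (Fin n × R))
    (hc : 0 < c) (hε : 2 / 3 < ε) (hδ : 0 < δ)
    (hexp : IsExpander n c ε δ E)
    (U Upp : Finset (Fin n))
    (hUpp : ∀ i ∈ Upp,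
      i ∉ U ∧ (2 * ε - 1) * c ≤ ((leftNbrs E i ∩ nbrSet E U).card : ℝ))
    (hcard : ((U ∪ Upp).card : ℝ) ≤ δ * n) :
    (3 * ε - 2) * Upp.card ≤ (1 - ε) * U.card := by
  obtain ⟨hdeg, hex⟩ := hexp
  have h1 := hex _ hcard
  have hdisj : Disjoint U Upp := by
    rw [Finset.disjoint_right]
    exact fun i hi => (hUpp i hi).1
  rw [Finset.card_union_of_disjoint hdisj] at h1
  have hU : ((nbrSet E U).card : ℝ) ≤ U.card * c := by
    exact_mod_cast Finset.card_biUnion_le_card_mul U (leftNbrs E) c (fun i _ => (hdeg i).le)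
  have hsub : nbrSet E (U ∪ Upp) ⊆
      nbrSet E U ∪ Upp.biUnion (fun i => leftNbrs E i \ nbrSet E U) := by
    intro j hj
    by_cases hjU : j ∈ nbrSet E U
    · exact Finset.mem_union_left _ hjU
    · obtain ⟨i, hi, hij⟩ := Finset.mem_biUnion.1 hj
      rcases Finset.mem_union.1 hi with h | h
      · exact absurd (Finset.mem_biUnion.2 ⟨i, h, hij⟩) hjU
      · exact Finset.mem_union_right _
          (Finset.mem_biUnion.2 ⟨i, h, Finset.mem_sdiff.2 ⟨hij, hjU⟩⟩)
  have h2 : ((nbrSet E (U ∪ Upp)).card : ℝ) ≤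
      (nbrSet E U).card + ∑ i ∈ Upp, ((leftNbrs E i \ nbrSet E U).card : ℝ) := by
    exact_mod_cast (Finset.card_le_card hsub).trans ((Finset.card_union_le _ _).trans
      (Nat.add_le_add_left Finset.card_biUnion_le _))
  have h3 : ∑ i ∈ Upp, ((leftNbrs E i \ nbrSet E U).card : ℝ) ≤
      Upp.card * ((2 - 2 * ε) * c) := by
    rw [← nsmul_eq_mul]
    refine Finset.sum_le_card_nsmul _ _ _ fun i hi => ?_
    have h4 := (hUpp i hi).2
    have h5 : ((leftNbrs E i \ nbrSet E U).card : ℝ) +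
        (leftNbrs E i ∩ nbrSet E U).card = c := by
      rw [← hdeg i]
      exact_mod_cast Finset.card_sdiff_add_card_inter _ _
    linarith
  have hc' : (0 : ℝ) < c := by exact_mod_cast hc
  refine le_of_mul_le_mul_left ?_ hc'
  push_cast at h1
  nlinarith
end

section
/- Let G = (L, R, E) be a (c, ε, δ)-expander Tanner graph on n left vertices such that εc is an integer, and let U ⊆ L satisfy |U| ≤ δn. Then there exists an (εc)-matching with respect to U. -/
open Finset

/-- If `G` is a `(c, ε, δ)`-expander with `εc ∈ ℤ` and `|U| ≤ δn`, then there
exists an `(εc)`-matching with respect to `U`: a matching `M ⊆ E` in which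
every `u ∈ U` is incident to at least `εc` edges. -/
theorem expander_has_matching {R : Type*} [Fintype R] [DecidableEq R]
    (n c : ℕ) (ε δ : ℝ) (E : Finset (Fin n × R))
    (hε : 0 < ε) (hδ : 0 < δ)
    (k : ℕ) (hk : (k : ℝ) = ε * c)
    (hexp : IsExpander n c ε δ E)
    (U : Finset (Fin n)) (hU : (U.card : ℝ) ≤ δ * n) :
    ∃ M ⊆ E, IsMatching M ∧
      ∀ u ∈ U, k ≤ (Finset.univ.filter fun j : R => (u, j) ∈ M).card := by
  classical
  obtain ⟨f, hf, hft⟩ := (Finset.all_card_le_biUnion_card_iff_exists_injective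
    (fun x : U × Fin k => leftNbrs E x.1.1)).1 (by
      intro s
      set S : Finset (Fin n) := s.image (fun x => x.1.1) with hS
      have hSU : S ⊆ U := by
        intro a ha
        obtain ⟨x, -, rfl⟩ := Finset.mem_image.1 ha
        exact x.1.2
      have h1 : (S.card : ℝ) ≤ δ * n :=
        le_trans (by exact_mod_cast Finset.card_le_card hSU) hU
      have h2 := hexp.2 S h1
      rw [← hk] at h2
      have h3 : k * S.card ≤ (nbrSet E S).card := by exact_mod_cast h2
      have h4 : s.card ≤ S.card * k := by
        have hc : s.card ≤ (S ×ˢ (Finset.univ : Finset (Fin k))).card := by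
          apply Finset.card_le_card_of_injOn (fun x => (x.1.1, x.2))
          · intro x hx
            simp only [Finset.coe_product, Set.mem_prod, Finset.mem_coe, Finset.mem_univ, and_true]
            exact Finset.mem_image_of_mem _ hx
          · rintro ⟨⟨a, ha⟩, i⟩ _ ⟨⟨b, hb⟩, j⟩ _ h
            simpa using h
        simpa [Finset.card_product] using hc
      have h5 : nbrSet E S = s.biUnion (fun x => leftNbrs E x.1.1) := by
        rw [nbrSet, hS, Finset.image_biUnion]
      rw [← h5]
      nlinarith)
  refine ⟨Finset.univ.image (fun x : U × Fin k => (x.1.1, f x)), ?_, ?_, ?_⟩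
  · intro e he
    obtain ⟨x, -, rfl⟩ := Finset.mem_image.1 he
    have := hft x
    simpa [leftNbrs] using this
  · intro j i i' h h'
    obtain ⟨x, -, hx⟩ := Finset.mem_image.1 h
    obtain ⟨y, -, hy⟩ := Finset.mem_image.1 h'
    simp only [Prod.mk.injEq] at hx hy
    have hxy : x = y := hf (hx.2.trans hy.2.symm)
    rw [← hx.1, ← hy.1, hxy]
  · intro u hu
    have hc : (Finset.univ : Finset (Fin k)).card ≤ (Finset.univ.filter fun j : R =>
        (u, j) ∈ Finset.univ.image (fun x : U × Fin k => (x.1.1, f x))).card := by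
      apply Finset.card_le_card_of_injOn (fun i => f (⟨u, hu⟩, i))
      · intro i _
        simp only [Finset.mem_coe, Finset.mem_filter, Finset.mem_univ, true_and]
        exact Finset.mem_image.2 ⟨(⟨u, hu⟩, i), Finset.mem_univ _, rfl⟩
      · intro i _ j _ h
        have := hf h
        simpa using this
    rw [Finset.card_univ, Fintype.card_fin] at hc
    convert hc
end

section
/- (Unique-neighbor expansion.) Let G = (L, R, E) be a (c, ε, δ)-expander Tanner graph on n left vertices. Then every subset L₀ ⊆ L with |L₀| ≤ δn satisfies |N¹(L₀)| ≥ (2ε−1)·c·|L₀|, where N¹(L₀) is the set of unique neighbors of L₀. -/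
open Finset

/-- `N¹(S)`: the set of unique neighbors of a set `S` of left vertices, i.e.
the check nodes having exactly one neighbor in `S`. -/
def uniqueNbrs {n : ℕ} {R : Type*} [Fintype R] [DecidableEq R]
    (E : Finset (Fin n × R)) (S : Finset (Fin n)) : Finset R :=
  Finset.univ.filter fun j => (rightNbrs E j ∩ S).card = 1

/-- Unique-neighbor expansion: if `G` is a `(c, ε, δ)`-expander then every
`L₀ ⊆ L` with `|L₀| ≤ δn` satisfies `|N¹(L₀)| ≥ (2ε−1)·c·|L₀|`. -/
theorem unique_neighbor_expansion {R : Type*} [Fintype R] [DecidableEq R]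
    (n c : ℕ) (ε δ : ℝ) (E : Finset (Fin n × R))
    (hε : 0 < ε) (hδ : 0 < δ)
    (hexp : IsExpander n c ε δ E)
    (L₀ : Finset (Fin n)) (hL₀ : (L₀.card : ℝ) ≤ δ * n) :
    (2 * ε - 1) * c * L₀.card ≤ ((uniqueNbrs E L₀).card : ℝ) := by
  obtain ⟨hdeg, hN⟩ := hexp
  have hN := hN L₀ hL₀
  have hd : ∑ j : R, (rightNbrs E j ∩ L₀).card = c * L₀.card := by
    have h1 : ∀ j : R, (rightNbrs E j ∩ L₀).card = ∑ i ∈ L₀, if (i, j) ∈ E then 1 else 0 := by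
      intro j
      rw [← Finset.card_filter]
      congr 1
      ext i
      simp [rightNbrs, and_comm]
    simp_rw [h1]
    rw [Finset.sum_comm]
    have h2 : ∀ i ∈ L₀, (∑ j : R, if (i, j) ∈ E then 1 else 0) = c := by
      intro i _
      rw [← Finset.card_filter, ← hdeg i]
      rfl
    rw [Finset.sum_congr rfl h2, Finset.sum_const, smul_eq_mul, mul_comm]
  have hn : nbrSet E L₀ = Finset.univ.filter fun j => (rightNbrs E j ∩ L₀).card ≠ 0 := by
    ext j
    simp only [nbrSet, leftNbrs, rightNbrs, Finset.mem_biUnion, Finset.mem_filter,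
      Finset.mem_univ, true_and, Finset.card_ne_zero, Finset.Nonempty, Finset.mem_inter]
    exact exists_congr fun i => and_comm
  have key : 2 * (nbrSet E L₀).card ≤ (uniqueNbrs E L₀).card + c * L₀.card := by
    rw [← hd, hn, uniqueNbrs, Finset.card_filter, Finset.card_filter, Finset.mul_sum,
      ← Finset.sum_add_distrib]
    apply Finset.sum_le_sum
    intro j _
    split_ifs <;> omega
  have key' : 2 * ((nbrSet E L₀).card : ℝ) ≤ (uniqueNbrs E L₀).card + c * L₀.card := by
    exact_mod_cast key
  linarith
end

section
/- (Expansion beyond δn.) Let G = (L, R, E) be a (c, ε, δ)-expander Tanner graph on n left vertices with ε > 1/2, and suppose δn is an integer. Then every subset S ⊆ L with δn < |S| ≤ 2εδn satisfies |N¹(S)| ≥ 2εδcn − c·|S|, where N¹(S) is the set of unique neighbors of S. -/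
open Finset

/-- Expansion beyond `δn`: if `G` is a `(c, ε, δ)`-expander with `ε > 1/2` and
`δn ∈ ℤ`, then every `S ⊆ L` with `δn < |S| ≤ 2εδn` satisfies
`|N¹(S)| ≥ 2εδcn − c|S|`. -/
theorem expansion_beyond_deltaN {R : Type*} [Fintype R] [DecidableEq R]
    (n c : ℕ) (ε δ : ℝ) (E : Finset (Fin n × R))
    (hε : 1 / 2 < ε) (hδ : 0 < δ)
    (m : ℕ) (hm : (m : ℝ) = δ * n)
    (hexp : IsExpander n c ε δ E)
    (S : Finset (Fin n)) (hS₁ : δ * n < (S.card : ℝ))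
    (hS₂ : (S.card : ℝ) ≤ 2 * ε * δ * n) :
    2 * ε * δ * c * n - c * S.card ≤ ((uniqueNbrs E S).card : ℝ) := by
  obtain ⟨hdeg, hex⟩ := hexp
  have hmS : m ≤ S.card := by
    have : (m : ℝ) < S.card := by rw [hm]; exact hS₁
    exact_mod_cast this.le
  obtain ⟨T, hTS, hTc⟩ := Finset.exists_subset_card_eq hmS
  have h1 := hex T (by rw [hTc, hm])
  rw [hTc, hm] at h1
  have h2 : (nbrSet E T).card ≤ (nbrSet E S).card :=
    Finset.card_le_card (Finset.biUnion_subset_biUnion_of_subset_left _ hTS)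
  have hsum : ∑ j : R, (rightNbrs E j ∩ S).card = c * S.card := by
    have e1 : ∀ j : R, (rightNbrs E j ∩ S).card = ∑ i ∈ S, if (i, j) ∈ E then 1 else 0 := by
      intro j
      rw [← Finset.card_filter]
      congr 1
      ext i
      simp [rightNbrs, and_comm]
    simp_rw [e1]
    rw [Finset.sum_comm]
    have e2 : ∀ i ∈ S, (∑ j : R, if (i, j) ∈ E then 1 else 0) = c := by
      intro i _
      rw [← Finset.card_filter]
      exact hdeg i
    rw [Finset.sum_congr rfl e2]
    simp [mul_comm]
  have h3 : 2 * (nbrSet E S).card ≤ c * S.card + (uniqueNbrs E S).card := by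
    have hN : nbrSet E S = Finset.univ.filter fun j => 1 ≤ (rightNbrs E j ∩ S).card := by
      ext j
      simp only [nbrSet, Finset.mem_biUnion, Finset.mem_filter, Finset.mem_univ, true_and,
        Nat.one_le_iff_ne_zero, ← Nat.pos_iff_ne_zero, Finset.card_pos]
      constructor
      · rintro ⟨i, hi, hj⟩
        exact ⟨i, by simpa [rightNbrs, leftNbrs, hi] using hj⟩
      · rintro ⟨i, hi⟩
        simp only [rightNbrs, Finset.mem_inter, Finset.mem_filter, Finset.mem_univ,
          true_and] at hi
        exact ⟨i, hi.2, by simpa [leftNbrs] using hi.1⟩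
    rw [hN, ← hsum, uniqueNbrs, Finset.card_filter, Finset.card_filter, Finset.mul_sum,
      ← Finset.sum_add_distrib]
    apply Finset.sum_le_sum
    intro j _
    split_ifs <;> omega
  have h2' : ((nbrSet E T).card : ℝ) ≤ (nbrSet E S).card := by exact_mod_cast h2
  have h3' : 2 * ((nbrSet E S).card : ℝ) ≤ c * S.card + (uniqueNbrs E S).card := by
    exact_mod_cast h3
  nlinarith [h1, h2', h3']
end

section
/- (Distance of expander codes.) Let G = (L, R, E) be a (c, ε, δ)-expander Tanner graph on n left vertices with ε > 1/2, and suppose δn is an integer. Let C = { w ∈ F₂ⁿ : for every j ∈ R, Σ_{i ∈ N(j)} w_i = 0 in F₂ } be the binary linear code defined by G. Then every nonzero codeword of C has Hamming weight at least 2εδn; equivalently, the minimum distance of C is at least 2εδn. -/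
open Finset

/-- Distance of expander codes: if `G` is a `(c, ε, δ)`-expander with
`ε > 1/2` and `δn ∈ ℤ`, and `C = { w ∈ 𝔽₂ⁿ : ∀ j ∈ R, Σ_{i ∈ N(j)} w_i = 0 }`
is the binary linear code defined by `G`, then every nonzero codeword of `C`
has Hamming weight at least `2εδn`. -/
theorem expander_code_distance {R : Type*} [Fintype R] [DecidableEq R]
    (n c : ℕ) (ε δ : ℝ) (E : Finset (Fin n × R))
    (hc : 0 < c) (hε : 1 / 2 < ε) (hδ : 0 < δ)
    (m : ℕ) (hm : (m : ℝ) = δ * n)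
    (hexp : IsExpander n c ε δ E)
    (w : Fin n → ZMod 2)
    (hw : ∀ j : R, (∑ i ∈ rightNbrs E j, w i) = 0)
    (hw0 : w ≠ 0) :
    2 * ε * δ * n ≤ ((Finset.univ.filter fun i => w i ≠ 0).card : ℝ) := by
  classical
  set S : Finset (Fin n) := Finset.univ.filter fun i => w i ≠ 0 with hS
  have hwone : ∀ i, w i ≠ 0 → w i = 1 := by
    intro i
    generalize w i = x
    revert x
    decide
  -- every check adjacent to the support sees it at least twice
  have htwo : ∀ j ∈ nbrSet E S, 2 ≤ (S.filter fun i => (i, j) ∈ E).card := by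
    intro j hj
    have hpos : 0 < (S.filter fun i => (i, j) ∈ E).card := by
      simp only [nbrSet, leftNbrs, Finset.mem_biUnion, Finset.mem_filter,
        Finset.mem_univ, true_and] at hj
      obtain ⟨i, hi, hij⟩ := hj
      exact Finset.card_pos.mpr ⟨i, Finset.mem_filter.mpr ⟨hi, hij⟩⟩
    have hsum : (((S.filter fun i => (i, j) ∈ E).card : ℕ) : ZMod 2) = 0 := by
      rw [← hw j, Finset.cast_card]
      have h1 : ∑ i ∈ S.filter (fun i => (i, j) ∈ E), (1 : ZMod 2)
          = ∑ i ∈ S.filter (fun i => (i, j) ∈ E), w i := by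
        refine Finset.sum_congr rfl fun i hi => ?_
        have := (Finset.mem_filter.mp (Finset.mem_filter.mp hi).1).2
        exact (hwone i this).symm
      rw [h1]
      refine Finset.sum_subset ?_ ?_
      · intro i hi
        simp only [rightNbrs, Finset.mem_filter, Finset.mem_univ, true_and]
        exact (Finset.mem_filter.mp hi).2
      · intro i hi hni
        by_contra hne
        simp only [rightNbrs, Finset.mem_filter, Finset.mem_univ, true_and] at hi
        exact hni (Finset.mem_filter.mpr ⟨by simp [hS, hne], hi⟩)
    have hdvd := (ZMod.natCast_eq_zero_iff _ 2).mp hsum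
    exact Nat.le_of_dvd hpos hdvd
  -- double counting of the edges leaving the support
  have hcount : (nbrSet E S).card * 2 ≤ S.card * c := by
    refine Finset.card_mul_le_card_mul (fun j i => (i, j) ∈ E) ?_ ?_
    · intro j hj
      exact htwo j hj
    · intro i _
      rw [← hexp.1 i]
      refine Finset.card_le_card ?_
      intro j hj
      simp only [Finset.bipartiteBelow, Finset.mem_filter] at hj
      simp [leftNbrs, hj.2]
  have hcountR : ((nbrSet E S).card : ℝ) * 2 ≤ S.card * c := by exact_mod_cast hcount
  have hcR : (0 : ℝ) < c := by exact_mod_cast hc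
  have hSpos : 0 < S.card := by
    obtain ⟨i, hi⟩ := Function.ne_iff.mp hw0
    exact Finset.card_pos.mpr ⟨i, by simpa [hS] using hi⟩
  have hSR : (0 : ℝ) < S.card := by exact_mod_cast hSpos
  have hmS : m ≤ S.card := by
    by_contra hlt
    have hle : (S.card : ℝ) ≤ δ * n := by
      rw [← hm]
      exact_mod_cast (not_le.mp hlt).le
    have h := hexp.2 S hle
    nlinarith [mul_pos hcR hSR]
  obtain ⟨T, hTS, hT⟩ := Finset.exists_subset_card_eq hmS
  have h := hexp.2 T (by rw [hT, hm])
  have hmono : ((nbrSet E T).card : ℝ) ≤ (nbrSet E S).card := by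
    exact_mod_cast Finset.card_le_card (Finset.biUnion_subset_biUnion_of_subset_left _ hTS)
  rw [hT] at h
  have hfin : c * (2 * ε * m) ≤ c * (S.card : ℝ) := by linarith
  have := le_of_mul_le_mul_left hfin hcR
  rw [hm] at this
  linarith
end
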